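/- arXiv:math/0509284 — 2 statements merged into one kernel-verified Lean document; each statement's English description precedes it below -/
import Mathlib

section
/- Let A be a commutative ring, Ω an A-module, and d : A → Ω a derivation. Let E be a finitely generated projective A-module, H an A-module equipped with a connection ℍ relative to d, and j : E → H a surjective A-linear map. Then there exists a connection ∇ on E relative to d such that (j ⊗ id_Ω) ∘ ∇ = ℍ ∘ j as maps E → H ⊗[A] Ω. -/
open TensorProduct

/-- Let `A` be a commutative ring, `Ω` an `A`-module, and `d : A → Ω` a
derivation. Let `E` be a finitely generated projective `A`-module, `H` an `A`-module with
a connection `ℍ` relative to `d`, and `j : E → H` a surjective `A`-linear map. Then there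
is a connection `∇` on `E` relative to `d` with `(j ⊗ id) ∘ ∇ = ℍ ∘ j`. -/
theorem stmt2 {A : Type*} [CommRing A] {Ω : Type*} [AddCommGroup Ω] [Module A Ω]
    (d : A →+ Ω) (hd : ∀ a b : A, d (a * b) = a • d b + b • d a)
    {E H : Type*} [AddCommGroup E] [Module A E] [Module.Finite A E] [Module.Projective A E]
    [AddCommGroup H] [Module A H]
    (ℍ : H →+ H ⊗[A] Ω)
    (hℍ : ∀ (a : A) (m : H), ℍ (a • m) = a • ℍ m + m ⊗ₜ[A] d a)
    (j : E →ₗ[A] H) (hj : Function.Surjective j) :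
    ∃ co : E →+ E ⊗[A] Ω,
      (∀ (a : A) (m : E), co (a • m) = a • co m + m ⊗ₜ[A] d a) ∧
      (∀ x : E, TensorProduct.map j (LinearMap.id : Ω →ₗ[A] Ω) (co x) = ℍ (j x)) := by
  obtain ⟨s, hs⟩ := Module.projective_def'.1 (inferInstance : Module.Projective A E)
  let F : (E →₀ A) →+ E ⊗[A] Ω :=
    Finsupp.liftAddHom (fun e => (TensorProduct.mk A E Ω e).toAddMonoidHom.comp d)
  have hF1 : ∀ (e : E) (b : A), F (Finsupp.single e b) = e ⊗ₜ[A] d b := by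
    intro e b
    simp [F]
  have hF : ∀ (a : A) (f : E →₀ A),
      F (a • f) = a • F f + (Finsupp.linearCombination A id f) ⊗ₜ[A] d a := by
    intro a f
    induction f using Finsupp.induction_linear with
    | zero => simp
    | add f g hf hg =>
      rw [smul_add, map_add, hf, hg, map_add, map_add, TensorProduct.add_tmul, smul_add]
      abel
    | single e b =>
      rw [Finsupp.smul_single, hF1, hF1, smul_eq_mul, hd, TensorProduct.tmul_add,
        TensorProduct.tmul_smul, Finsupp.linearCombination_single, id,
        TensorProduct.tmul_smul, TensorProduct.smul_tmul', TensorProduct.smul_tmul']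
  let c₀ : E →+ E ⊗[A] Ω := F.comp s.toAddMonoidHom
  have hc₀ : ∀ (a : A) (m : E), c₀ (a • m) = a • c₀ m + m ⊗ₜ[A] d a := by
    intro a m
    have h1 : Finsupp.linearCombination A id (s m) = m := LinearMap.congr_fun hs m
    have h2 := hF a (s m)
    rw [h1, ← map_smul] at h2
    exact h2
  let J := TensorProduct.map j (LinearMap.id : Ω →ₗ[A] Ω)
  have hJ : Function.Surjective J := TensorProduct.map_surjective hj Function.surjective_id
  let D : E →ₗ[A] H ⊗[A] Ω :=
    { toFun := fun x => ℍ (j x) - J (c₀ x)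
      map_add' := by
        intro x y
        simp only [map_add]
        abel
      map_smul' := by
        intro a x
        have h : J (x ⊗ₜ[A] d a) = j x ⊗ₜ[A] d a := TensorProduct.map_tmul _ _ _ _
        rw [map_smul, hℍ, hc₀, map_add, map_smul, h, RingHom.id_apply, smul_sub]
        abel }
  obtain ⟨φ, hφ⟩ := Module.projective_lifting_property J D hJ
  refine ⟨c₀ + φ.toAddMonoidHom, ?_, ?_⟩
  · intro a m
    change c₀ (a • m) + φ (a • m) = a • (c₀ m + φ m) + _
    rw [hc₀, map_smul, smul_add]
    abel
  · intro x
    change J (c₀ x + φ x) = _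
    have h : J (φ x) = ℍ (j x) - J (c₀ x) := LinearMap.congr_fun hφ x
    rw [map_add, h]
    abel
end

section
/- Let (A, 𝒜, D, c) be a curved dga over a field k whose degree-zero part R = 𝒜 0 is commutative and central in A, let (E^p)_{p∈ℤ} be a family of R-modules, let M = ⊕_p E^p ⊗[R] A be the induced graded right A-module, and let 𝔼 be a ℤ-connection on M. For e ∈ E^p and each q ≥ 0, let 𝔼^q(e) ∈ E^{p+1−q} ⊗[R] 𝒜 q denote the component of 𝔼(e ⊗ 1) in the summand E^{p+1−q} ⊗[R] 𝒜 q of the degree-(p+1) part of M. Then: (i) for every q ≠ 1, the map 𝔼^q is R-linear, i.e. 𝔼^q(r·e) = 𝔼^q(e)·r for all r ∈ R and e ∈ E^p; and (ii) 𝔼^1 satisfies the connection Leibniz rule 𝔼^1(r·e) = 𝔼^1(e)·r + (−1)^p e ⊗ D(r) for all r ∈ R and e ∈ E^p (note D(r) ∈ 𝒜 1). -/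
open TensorProduct

/-- A curved differential graded algebra over a field `k`, whose degree-zero part is
(identified with) a commutative ring `R` which is central in `A`: the grading is by
`R`-submodules `gr i` of the `k`-algebra `A`, forming an internal direct sum, with
`gr 0` equal to the (isomorphic) image of `R` in `A`, `gr i * gr j ⊆ gr (i+j)`, a
degree `+1` `k`-linear map `D` satisfying the graded Leibniz rule, and a curvature
element `c ∈ gr 2` with `D² = [c, ·]` and `D c = 0`. -/
structure CurvedDGAOver (k R A : Type*) [Field k] [CommRing R] [Algebra k R]
    [Ring A] [Algebra k A] [Algebra R A] [IsScalarTower k R A] where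
  gr : ℕ → Submodule R A
  isInternal : DirectSum.IsInternal gr
  gr_zero : gr 0 = LinearMap.range (Algebra.linearMap R A)
  inj : Function.Injective (algebraMap R A)
  mul_mem : ∀ {i j : ℕ} {a b : A}, a ∈ gr i → b ∈ gr j → a * b ∈ gr (i + j)
  D : A →ₗ[k] A
  D_mem : ∀ {i : ℕ} {a : A}, a ∈ gr i → D a ∈ gr (i + 1)
  leibniz : ∀ {i : ℕ} {a : A} (b : A), a ∈ gr i →
    D (a * b) = D a * b + ((-1 : ℤ) ^ i) • (a * D b)
  c : A
  c_mem : c ∈ gr 2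
  D_sq : ∀ a : A, D (D a) = c * a - a * c
  D_c : D c = 0

section

variable (k R A : Type*) [Field k] [CommRing R] [Algebra k R]
  [Ring A] [Algebra k A] [Algebra R A] [IsScalarTower k R A]
variable (𝔄 : CurvedDGAOver k R A)
variable (F : ℤ → Type*) [∀ p, AddCommGroup (F p)] [∀ p, Module R (F p)]
  [∀ p, Module k (F p)] [∀ p, IsScalarTower k R (F p)]

/-- The induced graded right `A`-module `M = ⊕ₚ F^p ⊗[R] A`. -/
abbrev IndMod := DirectSum ℤ (fun p => F p ⊗[R] A)

/-- The inclusion of the `p`-th summand. -/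
noncomputable def emb (p : ℤ) : (F p ⊗[R] A) →ₗ[R] IndMod R A F :=
  DirectSum.lof R ℤ (fun p => F p ⊗[R] A) p

/-- The right action of `a : A` on `M = ⊕ₚ F^p ⊗[R] A`, given on each summand by
`e ⊗ ω ↦ e ⊗ (ω * a)`. -/
noncomputable def rAct (a : A) : IndMod R A F →ₗ[R] IndMod R A F :=
  DirectSum.toModule R ℤ (IndMod R A F)
    (fun p => (emb R A F p).comp
      (TensorProduct.map (LinearMap.id : F p →ₗ[R] F p) (LinearMap.mulRight R a)))

/-- The degree-`n` part `⊕_{p+q=n} F^p ⊗[R] 𝒜 q` of `M`, as a submodule. -/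
noncomputable def degSub (n : ℤ) : Submodule R (IndMod R A F) :=
  ⨆ (p : ℤ) (q : ℕ) (_ : p + (q : ℤ) = n),
    Submodule.map (emb R A F p)
      (LinearMap.range (TensorProduct.map (LinearMap.id : F p →ₗ[R] F p) (𝔄.gr q).subtype))

/-- The part `⊕_{q ≥ 1} F^{p'-q} ⊗[R] 𝒜 q` of `M`, as a submodule. -/
noncomputable def hiSub (p' : ℤ) : Submodule R (IndMod R A F) :=
  ⨆ (q : ℕ) (_ : 1 ≤ q),
    Submodule.map (emb R A F (p' - q))
      (LinearMap.range (TensorProduct.map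
        (LinearMap.id : F (p' - q) →ₗ[R] F (p' - q)) (𝔄.gr q).subtype))

/-- A `ℤ`-connection on the induced module `M = ⊕ₚ F^p ⊗[R] A`: a `k`-linear map
raising the grading by one and satisfying the Leibniz rule. -/
def IsZConnection (𝔼 : IndMod R A F →ₗ[k] IndMod R A F) : Prop :=
  (∀ (n : ℤ) (m : IndMod R A F), m ∈ degSub k R A 𝔄 F n → 𝔼 m ∈ degSub k R A 𝔄 F (n + 1)) ∧
  (∀ (n : ℤ) (m : IndMod R A F) (a : A), m ∈ degSub k R A 𝔄 F n →
    𝔼 (rAct R A F a m) = rAct R A F a (𝔼 m)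
      + (((-1 : ℤˣ) ^ n : ℤˣ) : ℤ) • rAct R A F (𝔄.D a) m)

/-- Integrability of a `ℤ`-connection: `𝔼(𝔼 m) = - m · c`. -/
def IsIntegrable (𝔼 : IndMod R A F →ₗ[k] IndMod R A F) : Prop :=
  ∀ m : IndMod R A F, 𝔼 (𝔼 m) = - rAct R A F 𝔄.c m

end

section

variable {k R A : Type*} [Field k] [CommRing R] [Algebra k R]
  [Ring A] [Algebra k A] [Algebra R A] [IsScalarTower k R A]

/-- The projection of `A` onto its degree-`q` graded piece, coming from the internal
direct sum decomposition `A = ⊕ q, 𝒜 q`. -/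
noncomputable def projGr (𝔄 : CurvedDGAOver k R A) (q : ℕ) : A →ₗ[R] ↥(𝔄.gr q) :=
  (DirectSum.component R ℕ (fun i => ↥(𝔄.gr i)) q).comp
    (LinearEquiv.ofBijective (DirectSum.coeLinearMap 𝔄.gr) 𝔄.isInternal).symm.toLinearMap

variable (𝔄 : CurvedDGAOver k R A)
variable (E : ℤ → Type*) [∀ p, AddCommGroup (E p)] [∀ p, Module R (E p)]
  [∀ p, Module k (E p)] [∀ p, IsScalarTower k R (E p)]

/-- The component in the summand `E^{p'} ⊗[R] 𝒜 q` of `𝔼(e ⊗ 1)`, for `e ∈ E^p`.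
(For a `ℤ`-connection `𝔼` this vanishes unless `p' + q = p + 1`.) -/
noncomputable def connComp (𝔼 : IndMod R A E →ₗ[k] IndMod R A E)
    (p p' : ℤ) (q : ℕ) (e : E p) : E p' ⊗[R] ↥(𝔄.gr q) :=
  (TensorProduct.map (LinearMap.id : E p' →ₗ[R] E p') (projGr 𝔄 q))
    ((DirectSum.component R ℤ (fun i => E i ⊗[R] A) p') (𝔼 (emb R A E p (e ⊗ₜ[R] (1 : A)))))

theorem projGr_same (𝔄 : CurvedDGAOver k R A) (q : ℕ) (a : A) (ha : a ∈ 𝔄.gr q) :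
    projGr 𝔄 q a = ⟨a, ha⟩ := by
  have h : (LinearEquiv.ofBijective (DirectSum.coeLinearMap 𝔄.gr) 𝔄.isInternal).symm a
      = DirectSum.lof R ℕ (fun i => ↥(𝔄.gr i)) q ⟨a, ha⟩ := by
    rw [LinearEquiv.symm_apply_eq]
    exact (DirectSum.coeLinearMap_lof 𝔄.gr q ⟨a, ha⟩).symm
  simp only [projGr, LinearMap.comp_apply, LinearEquiv.coe_coe, h]
  exact DirectSum.component.lof_self R _ _

theorem rAct_emb (p : ℤ) (e : E p) (w a : A) :
    rAct R A E a (emb R A E p (e ⊗ₜ[R] w)) = emb R A E p (e ⊗ₜ[R] (w * a)) := by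
  simp [rAct, emb, DirectSum.toModule_lof]

theorem rAct_algebraMap (r : R) (m : IndMod R A E) :
    rAct R A E (algebraMap R A r) m = r • m := by
  have h : rAct R A E (algebraMap R A r) = r • LinearMap.id := by
    apply DirectSum.linearMap_ext
    intro p
    apply TensorProduct.ext'
    intro e w
    have := rAct_emb (R := R) E p e w (algebraMap R A r)
    simp only [emb] at this
    simp only [LinearMap.comp_apply, this, LinearMap.smul_apply, LinearMap.id_apply]
    rw [← Algebra.commutes, ← Algebra.smul_def, TensorProduct.tmul_smul, map_smul]
  rw [h]; rfl

theorem emb_mem_degSub (p : ℤ) (e : E p) :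
    emb R A E p (e ⊗ₜ[R] (1 : A)) ∈ degSub k R A 𝔄 E p := by
  have h1 : (1 : A) ∈ 𝔄.gr 0 := by
    rw [𝔄.gr_zero]; exact ⟨1, by simp⟩
  refine Submodule.mem_iSup_of_mem p (Submodule.mem_iSup_of_mem 0
    (Submodule.mem_iSup_of_mem (by simp) ?_))
  exact Submodule.mem_map_of_mem ⟨e ⊗ₜ[R] (⟨1, h1⟩ : 𝔄.gr 0), by simp⟩

theorem conn_smul (𝔼 : IndMod R A E →ₗ[k] IndMod R A E)
    (h𝔼 : IsZConnection k R A 𝔄 E 𝔼) (p : ℤ) (r : R) (e : E p) :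
    𝔼 (emb R A E p ((r • e) ⊗ₜ[R] (1 : A))) = r • 𝔼 (emb R A E p (e ⊗ₜ[R] (1 : A)))
      + (((-1 : ℤˣ) ^ p : ℤˣ) : ℤ) • emb R A E p (e ⊗ₜ[R] 𝔄.D (algebraMap R A r)) := by
  have h := h𝔼.2 p _ (algebraMap R A r) (emb_mem_degSub 𝔄 E p e)
  rw [rAct_algebraMap, rAct_algebraMap, rAct_emb, one_mul, ← map_smul,
    TensorProduct.smul_tmul'] at h
  exact h

theorem D_alg_mem (r : R) : 𝔄.D (algebraMap R A r) ∈ 𝔄.gr 1 :=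
  𝔄.D_mem (i := 0) (𝔄.gr_zero ▸ LinearMap.mem_range_self (Algebra.linearMap R A) r)

theorem connComp_smul (𝔼 : IndMod R A E →ₗ[k] IndMod R A E)
    (h𝔼 : IsZConnection k R A 𝔄 E 𝔼) (p p' : ℤ) (q : ℕ) (r : R) (e : E p) :
    connComp 𝔄 E 𝔼 p p' q (r • e) = r • connComp 𝔄 E 𝔼 p p' q e
      + (((-1 : ℤˣ) ^ p : ℤˣ) : ℤ) •
        (TensorProduct.map (LinearMap.id : E p' →ₗ[R] E p') (projGr 𝔄 q))
          ((DirectSum.component R ℤ (fun i => E i ⊗[R] A) p')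
            (emb R A E p (e ⊗ₜ[R] 𝔄.D (algebraMap R A r)))) := by
  unfold connComp
  rw [conn_smul 𝔄 E 𝔼 h𝔼, map_add, map_add, map_smul, map_smul, map_zsmul, map_zsmul]

/-- for a `ℤ`-connection `𝔼` on the induced module `M = ⊕ₚ E^p ⊗[R] A`,
the components `𝔼^q` of `𝔼(e ⊗ 1)` are `R`-linear for `q ≠ 1`, while the component
`𝔼^1` satisfies the connection Leibniz rule with respect to `D`. -/
theorem stmt8 {k R A : Type*} [Field k] [CommRing R] [Algebra k R]
    [Ring A] [Algebra k A] [Algebra R A] [IsScalarTower k R A]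
    (𝔄 : CurvedDGAOver k R A)
    (E : ℤ → Type*) [∀ p, AddCommGroup (E p)] [∀ p, Module R (E p)]
    [∀ p, Module k (E p)] [∀ p, IsScalarTower k R (E p)]
    (𝔼 : IndMod R A E →ₗ[k] IndMod R A E)
    (h𝔼 : IsZConnection k R A 𝔄 E 𝔼) :
    -- (i) for `q ≠ 1`, the component `𝔼^q : E^p → E^{p'} ⊗[R] 𝒜 q` is `R`-linear:
    (∀ (p p' : ℤ) (q : ℕ), p' + (q : ℤ) = p + 1 → q ≠ 1 →
      ∀ (r : R) (e : E p),
        connComp 𝔄 E 𝔼 p p' q (r • e) = r • connComp 𝔄 E 𝔼 p p' q e) ∧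
    -- (ii) the component `𝔼^1 : E^p → E^p ⊗[R] 𝒜 1` satisfies the Leibniz rule
    -- `𝔼^1(r·e) = 𝔼^1(e)·r + (−1)^p e ⊗ D(r)`:
    (∀ (p : ℤ) (r : R) (e : E p),
      connComp 𝔄 E 𝔼 p p 1 (r • e)
        = r • connComp 𝔄 E 𝔼 p p 1 e
          + (((-1 : ℤˣ) ^ p : ℤˣ) : ℤ) •
            (e ⊗ₜ[R] (⟨𝔄.D (algebraMap R A r),
              𝔄.D_mem (𝔄.gr_zero ▸ LinearMap.mem_range_self (Algebra.linearMap R A) r)⟩ :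
                ↥(𝔄.gr 1)))) := by
  refine ⟨fun p p' q hp hq r e => ?_, fun p r e => ?_⟩
  · rw [connComp_smul 𝔄 E 𝔼 h𝔼]
    have hne : p ≠ p' := by
      intro h; apply hq; omega
    rw [emb, DirectSum.component.of, dif_neg hne, map_zero, smul_zero, add_zero]
  · rw [connComp_smul 𝔄 E 𝔼 h𝔼, emb, DirectSum.component.lof_self, TensorProduct.map_tmul,
      projGr_same 𝔄 1 _ (D_alg_mem 𝔄 r)]
    rfl

end
end
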